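/- For the two-qubit example model, the sequence of subspaces (S_k) is 2-periodic: S_{k+2} = S_k for all k ≥ 0. Consequently S_{2k} equals the ℂ-span of {σx⊗σz, σy⊗σz, σz⊗σz} and S_{2k+1} equals the ℂ-span of {σx⊗I₂, σy⊗I₂, σz⊗I₂} for every k ≥ 0. -/

import Mathlib

/-!
Write `V Q = span {σx ⊗ Q, σy ⊗ Q, σz ⊗ Q}`. If `C Q = Q C = R`, then the Liouvillian of `A ⊗ C`
maps `P ⊗ Q` to `(-i [A, P]) ⊗ R`, so everything reduces to the Pauli relations
`-i [σx, σy] = 2 σz` and its cyclic versions.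

With `C = I₂` this shows that `V Q` is stable under both control Liouvillians, which moreover
generate all of `V Q` from `σz ⊗ Q`; hence `O(S) = V Q` as soon as `S ⊆ V Q` and
`σz ⊗ Q ∈ O(S)` (`Oset_eq_V`). This gives `S_0 = V σz`. With `C = σz`, the drift Liouvillian maps
`V Q` into `V R` and `σx ⊗ Q` to `2 σy ⊗ R`, from which a control produces `σz ⊗ R`. So
`O(L₀(V Q)) = V R` whenever `σz Q = Q σz = R` (`Oset_image_V`), and since `σz σz = I₂` and
`σz I₂ = σz` the sequence alternates between `V σz` and `V I₂`.
-/

open Matrix Kronecker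

/-- The Pauli matrix `σx`. -/
noncomputable def σx : Matrix (Fin 2) (Fin 2) ℂ := !![0, 1; 1, 0]

/-- The Pauli matrix `σy`. -/
noncomputable def σy : Matrix (Fin 2) (Fin 2) ℂ := !![0, -Complex.I; Complex.I, 0]

/-- The Pauli matrix `σz`. -/
noncomputable def σz : Matrix (Fin 2) (Fin 2) ℂ := !![1, 0; 0, -1]

/-- The 2×2 identity matrix. -/
noncomputable def I₂ : Matrix (Fin 2) (Fin 2) ℂ := 1

/-- The drift/encoding Hamiltonian `H₀ = σz ⊗ σz` of the two-qubit example model. -/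
noncomputable def H0 : Matrix (Fin 2 × Fin 2) (Fin 2 × Fin 2) ℂ := σz ⊗ₖ σz

/-- The control Hamiltonians `H₁ = σx ⊗ I₂` and `H₂ = σy ⊗ I₂` of the two-qubit example model. -/
noncomputable def Hc : Fin 2 → Matrix (Fin 2 × Fin 2) (Fin 2 × Fin 2) ℂ := ![σx ⊗ₖ I₂, σy ⊗ₖ I₂]

/-- The observable `M = σz ⊗ σz` of the two-qubit example model. -/
noncomputable def Mobs : Matrix (Fin 2 × Fin 2) (Fin 2 × Fin 2) ℂ := σz ⊗ₖ σz

/-- The Liouvillian `L(A) = [−i H, A]` as a linear endomorphism of matrices. -/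
noncomputable def Liou (H : Matrix (Fin 2 × Fin 2) (Fin 2 × Fin 2) ℂ) :
    Module.End ℂ (Matrix (Fin 2 × Fin 2) (Fin 2 × Fin 2) ℂ) :=
  LinearMap.mulLeft ℂ ((-Complex.I) • H) - LinearMap.mulRight ℂ ((-Complex.I) • H)

/-- `Oset S` is the ℂ-linear span of all operators `L_{j₁} ∘ ⋯ ∘ L_{jₙ}(A)` with `n ≥ 0`,
`j₁, …, jₙ ∈ {1, 2}` and `A ∈ S` (including `A` itself for `n = 0`). -/
noncomputable def Oset (S : Set (Matrix (Fin 2 × Fin 2) (Fin 2 × Fin 2) ℂ)) :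
    Submodule ℂ (Matrix (Fin 2 × Fin 2) (Fin 2 × Fin 2) ℂ) :=
  Submodule.span ℂ
    {X | ∃ (w : List (Fin 2)) (A : Matrix (Fin 2 × Fin 2) (Fin 2 × Fin 2) ℂ), A ∈ S ∧
      ((w.map fun j => Liou (Hc j)).prod) A = X}

/-- The subspaces `S_0 = O({M})`, `S_k = O(L₀(S_{k-1}))` of the two-qubit example model. -/
noncomputable def Sk : ℕ → Submodule ℂ (Matrix (Fin 2 × Fin 2) (Fin 2 × Fin 2) ℂ)
  | 0 => Oset {Mobs}
  | (k + 1) => Oset (Liou H0 '' (Sk k))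

/-- The span of `σx ⊗ Q`, `σy ⊗ Q` and `σz ⊗ Q`. -/
noncomputable def V (Q : Matrix (Fin 2) (Fin 2) ℂ) :
    Submodule ℂ (Matrix (Fin 2 × Fin 2) (Fin 2 × Fin 2) ℂ) :=
  Submodule.span ℂ {σx ⊗ₖ Q, σy ⊗ₖ Q, σz ⊗ₖ Q}

lemma x_mem_V (Q : Matrix (Fin 2) (Fin 2) ℂ) : σx ⊗ₖ Q ∈ V Q :=
  Submodule.subset_span (by simp)

lemma y_mem_V (Q : Matrix (Fin 2) (Fin 2) ℂ) : σy ⊗ₖ Q ∈ V Q :=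
  Submodule.subset_span (by simp)

lemma z_mem_V (Q : Matrix (Fin 2) (Fin 2) ℂ) : σz ⊗ₖ Q ∈ V Q :=
  Submodule.subset_span (by simp)

lemma Liou_kronecker {C Q R : Matrix (Fin 2) (Fin 2) ℂ} (h₁ : C * Q = R) (h₂ : Q * C = R)
    (A P : Matrix (Fin 2) (Fin 2) ℂ) :
    Liou (A ⊗ₖ C) (P ⊗ₖ Q) = ((-Complex.I) • (A * P - P * A)) ⊗ₖ R := by
  simp only [Liou, LinearMap.sub_apply, LinearMap.mulLeft_apply, LinearMap.mulRight_apply,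
    smul_mul_assoc, mul_smul_comm, ← mul_kronecker_mul, h₁, h₂]
  ext ⟨i, i'⟩ ⟨j, j'⟩
  simp only [Matrix.sub_apply, Matrix.smul_apply, kroneckerMap_apply, smul_eq_mul]
  ring

lemma I₂_mul (Q : Matrix (Fin 2) (Fin 2) ℂ) : I₂ * Q = Q := one_mul Q

lemma mul_I₂ (Q : Matrix (Fin 2) (Fin 2) ℂ) : Q * I₂ = Q := mul_one Q

lemma bracket_self (A : Matrix (Fin 2) (Fin 2) ℂ) :
    (-Complex.I) • (A * A - A * A) = (0 : ℂ) • A := by simp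

lemma bracket_xy : (-Complex.I) • (σx * σy - σy * σx) = (2 : ℂ) • σz := by
  ext i j
  fin_cases i <;> fin_cases j <;> simp [σx, σy, σz, mul_add, mul_sub] <;> norm_num

lemma bracket_yz : (-Complex.I) • (σy * σz - σz * σy) = (2 : ℂ) • σx := by
  ext i j
  fin_cases i <;> fin_cases j <;> simp [σx, σy, σz, mul_add] <;> norm_num

lemma bracket_zx : (-Complex.I) • (σz * σx - σx * σz) = (2 : ℂ) • σy := by
  ext i j
  fin_cases i <;> fin_cases j <;> simp [σx, σy, σz] <;> ring

lemma bracket_swap {A B D : Matrix (Fin 2) (Fin 2) ℂ} {c : ℂ}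
    (h : (-Complex.I) • (A * B - B * A) = c • D) :
    (-Complex.I) • (B * A - A * B) = (-c) • D := by
  rw [neg_smul c, ← h, ← smul_neg, neg_sub]

/-- The Liouvillian of `A ⊗ C`, with `A` a Pauli matrix, maps `V Q` into `V (C Q)` if `C`
and `Q` commute. -/
lemma Liou_mem_V {C Q R : Matrix (Fin 2) (Fin 2) ℂ} (h₁ : C * Q = R) (h₂ : Q * C = R)
    {A : Matrix (Fin 2) (Fin 2) ℂ} (hA : A = σx ∨ A = σy ∨ A = σz)
    {X : Matrix (Fin 2 × Fin 2) (Fin 2 × Fin 2) ℂ} (hX : X ∈ V Q) :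
    Liou (A ⊗ₖ C) X ∈ V R := by
  suffices h : V Q ≤ (V R).comap (Liou (A ⊗ₖ C)) from h hX
  refine Submodule.span_le.2 ?_
  rintro _ (rfl | rfl | rfl) <;> rcases hA with rfl | rfl | rfl <;>
    simp only [SetLike.mem_coe, Submodule.mem_comap, Liou_kronecker h₁ h₂, bracket_self,
      bracket_xy, bracket_yz, bracket_zx, bracket_swap bracket_xy, bracket_swap bracket_yz,
      bracket_swap bracket_zx, smul_kronecker] <;>
    apply Submodule.smul_mem <;>
    first | exact x_mem_V R | exact y_mem_V R | exact z_mem_V R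

lemma Liou_Hc_mem_V {Q : Matrix (Fin 2) (Fin 2) ℂ} (j : Fin 2)
    {X : Matrix (Fin 2 × Fin 2) (Fin 2 × Fin 2) ℂ} (hX : X ∈ V Q) :
    Liou (Hc j) X ∈ V Q := by
  fin_cases j
  · exact Liou_mem_V (I₂_mul Q) (mul_I₂ Q) (.inl rfl) hX
  · exact Liou_mem_V (I₂_mul Q) (mul_I₂ Q) (.inr (.inl rfl)) hX

lemma subset_Oset (S : Set (Matrix (Fin 2 × Fin 2) (Fin 2 × Fin 2) ℂ)) : S ⊆ Oset S :=
  fun A hA => Submodule.subset_span ⟨[], A, hA, rfl⟩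

lemma Liou_Hc_mem_Oset {S : Set (Matrix (Fin 2 × Fin 2) (Fin 2 × Fin 2) ℂ)} (j : Fin 2)
    {X : Matrix (Fin 2 × Fin 2) (Fin 2 × Fin 2) ℂ} (hX : X ∈ Oset S) :
    Liou (Hc j) X ∈ Oset S := by
  suffices h : Oset S ≤ (Oset S).comap (Liou (Hc j)) from h hX
  refine Submodule.span_le.2 ?_
  rintro _ ⟨w, A, hA, rfl⟩
  exact Submodule.subset_span ⟨j :: w, A, hA, by simp⟩

lemma Oset_le {S : Set (Matrix (Fin 2 × Fin 2) (Fin 2 × Fin 2) ℂ)}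
    {W : Submodule ℂ (Matrix (Fin 2 × Fin 2) (Fin 2 × Fin 2) ℂ)} (hS : S ⊆ W)
    (hW : ∀ j, ∀ X ∈ W, Liou (Hc j) X ∈ W) : Oset S ≤ W := by
  refine Submodule.span_le.2 ?_
  rintro _ ⟨w, A, hA, rfl⟩
  induction w with
  | nil => exact hS hA
  | cons j w ih => simpa using hW j _ ih

lemma Oset_eq_V {S : Set (Matrix (Fin 2 × Fin 2) (Fin 2 × Fin 2) ℂ)}
    {Q : Matrix (Fin 2) (Fin 2) ℂ} (hS : S ⊆ V Q) (hz : σz ⊗ₖ Q ∈ Oset S) :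
    Oset S = V Q := by
  refine le_antisymm (Oset_le hS fun j _ => Liou_Hc_mem_V j) (Submodule.span_le.2 ?_)
  have hx : Liou (σy ⊗ₖ I₂) (σz ⊗ₖ Q) ∈ Oset S := Liou_Hc_mem_Oset 1 hz
  have hy : Liou (σx ⊗ₖ I₂) (σz ⊗ₖ Q) ∈ Oset S := Liou_Hc_mem_Oset 0 hz
  rw [Liou_kronecker (I₂_mul Q) (mul_I₂ Q), bracket_yz, smul_kronecker,
    Submodule.smul_mem_iff _ two_ne_zero] at hx
  rw [Liou_kronecker (I₂_mul Q) (mul_I₂ Q), bracket_swap bracket_zx, smul_kronecker,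
    Submodule.smul_mem_iff _ (neg_ne_zero.2 two_ne_zero)] at hy
  rintro _ (rfl | rfl | rfl)
  exacts [hx, hy, hz]

lemma Oset_image_V {Q R : Matrix (Fin 2) (Fin 2) ℂ} (h₁ : σz * Q = R) (h₂ : Q * σz = R) :
    Oset (Liou H0 '' (V Q)) = V R := by
  refine Oset_eq_V ?_ ?_
  · rintro _ ⟨X, hX, rfl⟩
    exact Liou_mem_V h₁ h₂ (.inr (.inr rfl)) hX
  · have hy : Liou (σz ⊗ₖ σz) (σx ⊗ₖ Q) ∈ Oset (Liou H0 '' (V Q)) :=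
      subset_Oset _ ⟨_, x_mem_V Q, rfl⟩
    rw [Liou_kronecker h₁ h₂, bracket_zx, smul_kronecker,
      Submodule.smul_mem_iff _ two_ne_zero] at hy
    have hz : Liou (σx ⊗ₖ I₂) (σy ⊗ₖ R) ∈ Oset (Liou H0 '' (V Q)) := Liou_Hc_mem_Oset 0 hy
    rwa [Liou_kronecker (I₂_mul R) (mul_I₂ R), bracket_xy, smul_kronecker,
      Submodule.smul_mem_iff _ two_ne_zero] at hz

lemma σz_mul_σz : σz * σz = I₂ := by
  ext i j
  fin_cases i <;> fin_cases j <;> simp [σz, I₂]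

lemma Sk_succ_of_eq_V_σz {k : ℕ} (h : Sk k = V σz) : Sk (k + 1) = V I₂ := by
  rw [Sk, h, Oset_image_V σz_mul_σz σz_mul_σz]

lemma Sk_succ_of_eq_V_I₂ {k : ℕ} (h : Sk k = V I₂) : Sk (k + 1) = V σz := by
  rw [Sk, h, Oset_image_V (mul_I₂ σz) (I₂_mul σz)]

lemma Sk_even (k : ℕ) : Sk (2 * k) = V σz := by
  induction k with
  | zero =>
    exact Oset_eq_V (Set.singleton_subset_iff.2 (z_mem_V σz)) (subset_Oset _ rfl)
  | succ k ih => exact Sk_succ_of_eq_V_I₂ (Sk_succ_of_eq_V_σz ih)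

/-- For the two-qubit example model, the sequence `(S_k)` is 2-periodic, with
`S_{2k} = spanℂ{σx⊗σz, σy⊗σz, σz⊗σz}` and `S_{2k+1} = spanℂ{σx⊗I₂, σy⊗I₂, σz⊗I₂}`. -/
theorem Sk_two_periodic :
    (∀ k : ℕ, Sk (k + 2) = Sk k) ∧
    (∀ k : ℕ, Sk (2 * k) = Submodule.span ℂ {σx ⊗ₖ σz, σy ⊗ₖ σz, σz ⊗ₖ σz}) ∧
    (∀ k : ℕ, Sk (2 * k + 1) = Submodule.span ℂ {σx ⊗ₖ I₂, σy ⊗ₖ I₂, σz ⊗ₖ I₂}) := by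
  refine ⟨fun k => ?_, Sk_even, fun k => Sk_succ_of_eq_V_σz (Sk_even k)⟩
  obtain ⟨m, rfl | rfl⟩ := k.even_or_odd'
  · exact (Sk_even (m + 1)).trans (Sk_even m).symm
  · exact (Sk_succ_of_eq_V_σz (Sk_even (m + 1))).trans (Sk_succ_of_eq_V_σz (Sk_even m)).symm
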